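/- arXiv:2406.05585 — 3 statements merged into one kernel-verified Lean document; each statement's English description precedes it below -/
import Mathlib

section
/- Let G be a connected simple graph on a finite nonempty linearly ordered vertex type V with oriented incidence matrix D, let T be a spanning tree of G, and let S and F be vertices of G. Let d' be the unique integer 1-chain supported on the edges of T with boundary D·d' = 1_F − 1_S. Then every integer 1-chain p' with boundary D·p' = 1_F − 1_S satisfies p' = Σ_{e ∉ T} p'(e)·c_e + d', where the sum runs over the edges e of G not in T, p'(e) denotes the coefficient of p' on e, and c_e is the fundamental cycle of e. -/
/-!
A cycle vanishes on every edge `e` that is a bridge of a graph carrying its support: pair its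
boundary with the indicator function of the component of an endpoint of `e` after `e` is deleted.
In the pairing only the edge `e` crosses between the two sides. All edges of a forest are bridges,
so a chain is determined by its boundary and its coefficients off the forest. The only off-tree
edge on which a fundamental cycle `c_e` is nonzero is `e` itself, with coefficient `1`, so the two
sides of the identity have the same boundary and the same off-tree coefficients.
-/

open SimpleGraph Matrix

/-- The oriented incidence matrix of a simple graph on a linearly ordered vertex type:
the column of an edge with endpoints `a < b` has `+1` in row `b`, `-1` in row `a`,
and `0` elsewhere. -/
def orientedIncMat {V : Type*} [LinearOrder V] (G : SimpleGraph V) :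
    Matrix V G.edgeSet ℤ := fun v e =>
  (if v = (e : Sym2 V).sup then 1 else 0) - (if v = (e : Sym2 V).inf then 1 else 0)

section Cycles

variable {V : Type*} [LinearOrder V] {G T : SimpleGraph V}

theorem sym2_mk_inf_sup (z : Sym2 V) : s(z.inf, z.sup) = z :=
  Sym2.sortEquiv.symm_apply_apply z

theorem sum_mul_orientedIncMat {s : Finset V} {e : G.edgeSet} (hinf : e.1.inf ∈ s)
    (hsup : e.1.sup ∈ s) (φ : V → ℤ) :
    ∑ v ∈ s, φ v * orientedIncMat G v e = φ e.1.sup - φ e.1.inf := by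
  simp [orientedIncMat, mul_sub, Finset.sum_sub_distrib, hinf, hsup]

variable [Fintype G.edgeSet] {x y : G.edgeSet → ℤ}

theorem sum_potential_sub_mul_cycle_eq_zero (hx : orientedIncMat G *ᵥ x = 0) (φ : V → ℤ) :
    ∑ e : G.edgeSet, (φ e.1.sup - φ e.1.inf) * x e = 0 := by
  let s : Finset V := Finset.univ.image (fun e : G.edgeSet ↦ e.1.inf) ∪
    Finset.univ.image fun e : G.edgeSet ↦ e.1.sup
  have hinf (e : G.edgeSet) : e.1.inf ∈ s :=
    Finset.mem_union_left _ (Finset.mem_image_of_mem _ (Finset.mem_univ e))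
  have hsup (e : G.edgeSet) : e.1.sup ∈ s :=
    Finset.mem_union_right _ (Finset.mem_image_of_mem _ (Finset.mem_univ e))
  calc
    _ = ∑ e, ∑ v ∈ s, φ v * (orientedIncMat G v e * x e) := by
      simp only [← sum_mul_orientedIncMat (hinf _) (hsup _) φ, Finset.sum_mul, mul_assoc]
    _ = ∑ v ∈ s, φ v * (orientedIncMat G *ᵥ x) v := by
      rw [Finset.sum_comm]
      simp only [mulVec, dotProduct, Finset.mul_sum]
    _ = 0 := by simp only [hx, Pi.zero_apply, mul_zero, Finset.sum_const_zero]

theorem cycle_apply_eq_zero_of_potential (hx : orientedIncMat G *ᵥ x = 0) (φ : V → ℤ)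
    {e : G.edgeSet} (he : φ e.1.inf ≠ φ e.1.sup)
    (hφ : ∀ f : G.edgeSet, f ≠ e → x f ≠ 0 → φ f.1.inf = φ f.1.sup) :
    x e = 0 := by
  have hpair := sum_potential_sub_mul_cycle_eq_zero hx φ
  have hoff (f : G.edgeSet) (hf : f ≠ e) : (φ f.1.sup - φ f.1.inf) * x f = 0 := by
    by_cases hxf : x f = 0
    · rw [hxf, mul_zero]
    · rw [hφ f hf hxf, sub_self, zero_mul]
  rw [Fintype.sum_eq_single e hoff] at hpair
  exact (mul_eq_zero.mp hpair).resolve_left (sub_ne_zero.mpr he.symm)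

theorem cycle_apply_eq_zero_of_isBridge (hx : orientedIncMat G *ᵥ x = 0)
    (hsupp : ∀ f : G.edgeSet, (f : Sym2 V) ∉ T.edgeSet → x f = 0)
    {e : G.edgeSet} (he : T.IsBridge e) : x e = 0 := by
  classical
  let T' := T.deleteEdges {e.1}
  let a := e.1.inf
  have hsep : ¬ T'.Reachable a e.1.sup := by
    rwa [← sym2_mk_inf_sup e.1, isBridge_iff, sym2_mk_inf_sup] at he
  refine cycle_apply_eq_zero_of_potential hx (fun v ↦ if T'.Reachable a v then 1 else 0) ?_ ?_
  · simp [a, hsep]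
  · intro f hfe hxf
    have hfT : (f : Sym2 V) ∈ T.edgeSet := not_imp_comm.mp (hsupp f) hxf
    have hadj : T'.Adj f.1.inf f.1.sup := by
      rw [← mem_edgeSet, sym2_mk_inf_sup, edgeSet_deleteEdges]
      exact ⟨hfT, fun h ↦ hfe (Subtype.ext h)⟩
    have hiff : T'.Reachable a f.1.inf ↔ T'.Reachable a f.1.sup :=
      ⟨fun h ↦ h.trans hadj.reachable, fun h ↦ h.trans hadj.symm.reachable⟩
    simp only [hiff]

theorem cycle_eq_zero_of_isAcyclic (hT : T.IsAcyclic) (hx : orientedIncMat G *ᵥ x = 0)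
    (hsupp : ∀ e : G.edgeSet, (e : Sym2 V) ∉ T.edgeSet → x e = 0) : x = 0 := by
  funext e
  by_cases he : (e : Sym2 V) ∈ T.edgeSet
  · exact cycle_apply_eq_zero_of_isBridge hx hsupp (isAcyclic_iff_forall_isBridge.mp hT he)
  · exact hsupp e he

theorem chain_eq_of_boundary_eq_of_isAcyclic (hT : T.IsAcyclic)
    (hbd : orientedIncMat G *ᵥ x = orientedIncMat G *ᵥ y)
    (hoff : ∀ e : G.edgeSet, (e : Sym2 V) ∉ T.edgeSet → x e = y e) : x = y := by
  refine sub_eq_zero.mp (cycle_eq_zero_of_isAcyclic hT ?_ fun e he ↦ ?_)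
  · rw [mulVec_sub, hbd, sub_self]
  · rw [Pi.sub_apply, hoff e he, sub_self]

end Cycles

theorem sum_smul_apply_of_dual {ι R : Type*} [NonAssocSemiring R] {p : ι → Prop}
    [Fintype {i // p i}] {c : {i // p i} → ι → R} (hone : ∀ i, c i i.1 = 1)
    (hzero : ∀ i j, p j → j ≠ i.1 → c i j = 0) (a : {i // p i} → R) (i : {i // p i}) :
    (∑ j, a j • c j) i.1 = a i := by
  have hoff (j : {i // p i}) (hji : j ≠ i) : a j * c j i.1 = 0 := by
    rw [hzero j i.1 i.2 fun h ↦ hji (Subtype.ext h.symm), mul_zero]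
  simp only [Finset.sum_apply, Pi.smul_apply, smul_eq_mul]
  rw [Fintype.sum_eq_single i hoff, hone, mul_one]

theorem chain_eq_fundamental_cycles_add_default_general {V : Type*} [LinearOrder V]
    {G T : SimpleGraph V} [Fintype G.edgeSet]
    [Fintype {e : G.edgeSet // (e : Sym2 V) ∉ T.edgeSet}] (hT : T.IsAcyclic)
    {d' : G.edgeSet → ℤ} (hd'supp : ∀ e : G.edgeSet, (e : Sym2 V) ∉ T.edgeSet → d' e = 0)
    {c : {e : G.edgeSet // (e : Sym2 V) ∉ T.edgeSet} → G.edgeSet → ℤ}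
    (hcycle : ∀ e, orientedIncMat G *ᵥ c e = 0)
    (hone : ∀ e, c e e.1 = 1)
    (hzero : ∀ e (f : G.edgeSet), (f : Sym2 V) ∉ T.edgeSet → f ≠ e.1 → c e f = 0)
    {p' : G.edgeSet → ℤ} (hbd : orientedIncMat G *ᵥ p' = orientedIncMat G *ᵥ d') :
    p' = (∑ e, p' e.1 • c e) + d' := by
  refine chain_eq_of_boundary_eq_of_isAcyclic hT ?_ fun e he ↦ ?_
  · have hsum : orientedIncMat G *ᵥ ∑ e, p' e.1 • c e = 0 := by
      simp only [mulVec_sum, mulVec_smul, hcycle, smul_zero, Finset.sum_const_zero]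
    rw [mulVec_add, hsum, zero_add, hbd]
  · rw [Pi.add_apply, hd'supp e he, add_zero]
    exact (sum_smul_apply_of_dual hone hzero (fun f ↦ p' f.1) ⟨e, he⟩).symm

open scoped Classical in
theorem chain_eq_fundamental_cycles_add_default {V : Type*} [Fintype V] [Nonempty V]
    [LinearOrder V] (G T : SimpleGraph V) [DecidableRel G.Adj] (hG : G.Connected)
    (hTG : T ≤ G) (hT : T.IsTree) (S F : V)
    (d' : G.edgeSet → ℤ)
    (hd'supp : ∀ e : G.edgeSet, (e : Sym2 V) ∉ T.edgeSet → d' e = 0)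
    (hd'bd : orientedIncMat G *ᵥ d' = Pi.single F 1 - Pi.single S 1)
    (c : {e : G.edgeSet // (e : Sym2 V) ∉ T.edgeSet} → G.edgeSet → ℤ)
    (hcycle : ∀ e, orientedIncMat G *ᵥ c e = 0)
    (hone : ∀ e, c e e.1 = 1)
    (hzero : ∀ e (f : G.edgeSet), (f : Sym2 V) ∉ T.edgeSet → f ≠ e.1 → c e f = 0)
    (p' : G.edgeSet → ℤ)
    (hp' : orientedIncMat G *ᵥ p' = Pi.single F 1 - Pi.single S 1) :
    p' = (∑ e, p' e.1 • c e) + d' :=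
  chain_eq_fundamental_cycles_add_default_general hT.isAcyclic hd'supp hcycle hone hzero
    (hp'.trans hd'bd.symm)
end

section
/- Let G be a connected simple graph on a finite nonempty linearly ordered vertex type V with edge set E and oriented incidence matrix D. For any subset S of E with |S| < |E| − |V| + 1, the restriction map sending a cycle to its values on the edges in S is not injective on ker D: there exist two distinct cycles of G that agree on every edge of S. -/
open SimpleGraph Matrix

/-!
The incidence matrix is the matrix of the boundary map `ℤ^E → ℤ^V`. Composing it with the
surjection `ℤ^V → ℤ^C` that sums over each of the connected components `C` gives zero, so its image
has rank at most `|V| - |C|` and the cycles have rank at least `|E| - |V| + |C|`. A module of rank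
greater than `|S|` does not embed into `ℤ^S`.
-/

open Module

theorem finrank_add_finrank_le_of_comp_eq_zero {R M N P : Type*} [CommRing R] [IsDomain R]
    [AddCommGroup M] [Module R M] [Module.Finite R M] [AddCommGroup N] [Module R N]
    [Module.Finite R N] [AddCommGroup P] [Module R P] {f : M →ₗ[R] N} {g : N →ₗ[R] P}
    (hgf : g ∘ₗ f = 0) (hg : Function.Surjective g) :
    finrank R M + finrank R P ≤ finrank R (LinearMap.ker f) + finrank R N := by
  have hM : finrank R (LinearMap.range f) + finrank R (LinearMap.ker f) = finrank R M := by
    rw [← f.quotKerEquivRange.finrank_eq, Submodule.finrank_quotient_add_finrank]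
  have hN := (LinearMap.range f).finrank_quotient_add_finrank
  have hP : finrank R P ≤ finrank R (N ⧸ LinearMap.range f) := by
    let cokerToP := (LinearMap.range f).liftQ g (LinearMap.range_le_ker_iff.mpr hgf)
    have hsurj : Function.Surjective cokerToP := .of_comp (g := (LinearMap.range f).mkQ) hg
    exact LinearMap.finrank_le_finrank_of_surjective hsurj
  lia

theorem not_injOn_restrict_of_card_lt_finrank {R ι : Type*} [Ring R] [StrongRankCondition R]
    (p : Submodule R (ι → R)) (S : Finset ι) (hS : S.card < finrank R p) :
    ¬ Set.InjOn S.restrict (p : Set (ι → R)) := by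
  intro hinj
  let r : p →ₗ[R] S → R := LinearMap.funLeft R R Subtype.val ∘ₗ p.subtype
  have hr : Function.Injective r := Set.injOn_iff_injective.mp hinj
  have hle := LinearMap.finrank_le_finrank_of_injective hr
  rw [finrank_fintype_fun_eq_card, Fintype.card_coe] at hle
  exact hle.not_gt hS

theorem funOnFinite_linearMap_surjective {R M X Y : Type*} [Semiring R] [AddCommMonoid M]
    [Module R M] [Finite X] [Finite Y] {f : X → Y} (hf : Function.Surjective f) :
    Function.Surjective (FunOnFinite.linearMap R M f) := by
  refine Function.LeftInverse.surjective (g := FunOnFinite.linearMap R M (Function.surjInv hf)) ?_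
  intro y
  rw [← LinearMap.comp_apply, ← FunOnFinite.linearMap_comp,
    (Function.rightInverse_surjInv hf).comp_eq_id, FunOnFinite.linearMap_id, LinearMap.id_apply]

section Graph

variable {V : Type*} [LinearOrder V] (G : SimpleGraph V)

theorem orientedIncMat_col (e : G.edgeSet) :
    (orientedIncMat G).col e = Pi.single (e : Sym2 V).sup 1 - Pi.single (e : Sym2 V).inf 1 := by
  ext v
  simp only [col_apply, orientedIncMat, Pi.sub_apply, Pi.single_apply]

theorem connectedComponentMk_sup_eq_inf (e : G.edgeSet) :
    G.connectedComponentMk (e : Sym2 V).sup = G.connectedComponentMk (e : Sym2 V).inf := by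
  have hadj : G.Adj (e : Sym2 V).inf (e : Sym2 V).sup := by
    have hmk : s((e : Sym2 V).inf, (e : Sym2 V).sup) = e := Sym2.sortEquiv.symm_apply_apply _
    rw [← mem_edgeSet, hmk]
    exact e.property
  exact (ConnectedComponent.connectedComponentMk_eq_of_adj hadj).symm

variable [Fintype G.edgeSet]

/-- The `ℤ`-module of cycles of `G`, the kernel of the boundary map; its rank is to be compared with
the number of edges on which cycles are prescribed. -/
def cycleModule : Submodule ℤ (G.edgeSet → ℤ) :=
  LinearMap.ker (orientedIncMat G).mulVecLin

theorem linearMap_connectedComponentMk_comp_mulVecLin_orientedIncMat [Finite V] :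
    FunOnFinite.linearMap ℤ ℤ G.connectedComponentMk ∘ₗ (orientedIncMat G).mulVecLin = 0 := by
  classical
  refine LinearMap.pi_ext' fun e => LinearMap.ext_ring ?_
  simp [orientedIncMat_col, connectedComponentMk_sup_eq_inf]

theorem card_edgeSet_add_card_connectedComponent_le [Fintype V] :
    Fintype.card G.edgeSet + Nat.card G.ConnectedComponent ≤
      finrank ℤ (cycleModule G) + Fintype.card V := by
  have hle := finrank_add_finrank_le_of_comp_eq_zero
    (linearMap_connectedComponentMk_comp_mulVecLin_orientedIncMat G)
    (funOnFinite_linearMap_surjective Quot.mk_surjective)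
  have := Fintype.ofFinite G.ConnectedComponent
  simp only [finrank_fintype_fun_eq_card] at hle
  rwa [← Nat.card_eq_fintype_card (α := G.ConnectedComponent)] at hle

end Graph

theorem not_injective_restriction_of_small_general {V : Type*} [Fintype V] [LinearOrder V]
    (G : SimpleGraph V) [Fintype G.edgeSet] (S : Finset G.edgeSet)
    (hS : S.card + Fintype.card V < Fintype.card G.edgeSet + Nat.card G.ConnectedComponent) :
    ∃ c₁ c₂ : G.edgeSet → ℤ, orientedIncMat G *ᵥ c₁ = 0 ∧ orientedIncMat G *ᵥ c₂ = 0 ∧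
      c₁ ≠ c₂ ∧ ∀ e ∈ S, c₁ e = c₂ e := by
  have hrank : S.card < finrank ℤ (cycleModule G) := by
    have := card_edgeSet_add_card_connectedComponent_le G
    lia
  have hinj := not_injOn_restrict_of_card_lt_finrank (cycleModule G) S hrank
  simp only [Set.InjOn, not_forall] at hinj
  obtain ⟨c₁, hc₁, c₂, hc₂, hrestrict, hne⟩ := hinj
  exact ⟨c₁, c₂, hc₁, hc₂, hne, fun e he => congrFun hrestrict ⟨e, he⟩⟩

theorem not_injective_restriction_of_small {V : Type*} [Fintype V] [Nonempty V]
    [LinearOrder V] (G : SimpleGraph V) [DecidableRel G.Adj] (hG : G.Connected)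
    (S : Finset G.edgeSet)
    (hS : S.card + Fintype.card V < Fintype.card G.edgeSet + 1) :
    ∃ c₁ c₂ : G.edgeSet → ℤ, orientedIncMat G *ᵥ c₁ = 0 ∧ orientedIncMat G *ᵥ c₂ = 0 ∧
      c₁ ≠ c₂ ∧ ∀ e ∈ S, c₁ e = c₂ e :=
  not_injective_restriction_of_small_general G S <|
    hS.trans_le (Nat.add_le_add_left Nat.card_pos _)
end

section
/- Let G be a connected simple graph on a finite nonempty linearly ordered vertex type V with oriented incidence matrix D, let T be a spanning tree of G, and let S and F be vertices of G. Then there exists a unique integer 1-chain d' that is supported on the edges of T (i.e., d' vanishes on every edge of G not in T) and has boundary D·d' = 1_F − 1_S. -/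
open SimpleGraph Matrix

/-! Existence: in the boundary of the signed sum of the edges of a walk all intermediate vertices
cancel. Uniqueness: the difference of two solutions is a cycle `z` supported on the forest `T`.
Every edge `e` of `T` is a bridge, so the indicator of one side of the resulting cut is constant
along each other edge of `T`, and pairing it with the boundary of `z` isolates the coefficient of
`e`. -/

section Boundary

variable {V : Type*} [LinearOrder V] {G : SimpleGraph V} [Fintype G.edgeSet]

theorem orientedIncMat_mulVec_single (e : G.edgeSet) (x : ℤ) :
    orientedIncMat G *ᵥ Pi.single e x =
      Pi.single (e : Sym2 V).sup x - Pi.single (e : Sym2 V).inf x := by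
  ext v
  simp [orientedIncMat, Pi.single_apply, sub_mul]

theorem sum_smul_sub_eq_zero_of_mulVec_eq_zero {M : Type*} [AddCommGroup M] (f : V → M)
    {c : G.edgeSet → ℤ} (hc : orientedIncMat G *ᵥ c = 0) :
    ∑ e, c e • (f (e : Sym2 V).sup - f (e : Sym2 V).inf) = 0 := by
  -- A finitely supported 0-chain can be paired with any `f`, even when `V` is infinite.
  have boundary_eq_zero : ∑ e : G.edgeSet,
      c e • (Finsupp.single (e : Sym2 V).sup (1 : ℤ) - Finsupp.single (e : Sym2 V).inf 1) = 0 := by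
    ext v
    simpa [mulVec, dotProduct, orientedIncMat, Finsupp.single_apply, mul_comm, eq_comm]
      using congrFun hc v
  simpa using congrArg (Finsupp.linearCombination ℤ f) boundary_eq_zero

end Boundary

section ChainsOn

variable {V : Type*} {G T : SimpleGraph V}

/-- The integer 1-chains of `G` supported on the edges of `T`. Edges of `T` outside `G` carry no
coefficient. -/
def chainsOn (G T : SimpleGraph V) : Submodule ℤ (G.edgeSet → ℤ) :=
  Submodule.pi {e | (e : Sym2 V) ∉ T.edgeSet} fun _ => ⊥

theorem mem_chainsOn {c : G.edgeSet → ℤ} :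
    c ∈ chainsOn G T ↔ ∀ e : G.edgeSet, (e : Sym2 V) ∉ T.edgeSet → c e = 0 :=
  Iff.rfl

theorem single_mem_chainsOn [DecidableEq G.edgeSet] {e : G.edgeSet}
    (he : (e : Sym2 V) ∈ T.edgeSet) (x : ℤ) : Pi.single e x ∈ chainsOn G T := by
  refine mem_chainsOn.mpr fun e' he' => ?_
  apply Pi.single_eq_of_ne
  rintro rfl
  exact he' he

end ChainsOn

section WalkChain

variable {V : Type*} [LinearOrder V] {G T : SimpleGraph V} {u v : V}

/-- The 1-chain of a dart: its edge, with sign `1` if the dart runs along the orientation of the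
edge and `-1` if it runs against it. -/
def dartChain (d : G.Dart) : G.edgeSet → ℤ :=
  Pi.single ⟨d.edge, d.edge_mem⟩ (if d.fst ≤ d.snd then 1 else -1)

/-- The 1-chain of a walk, the sum of the chains of its darts; an edge contributes once for each
traversal, so traversals in opposite directions cancel. -/
def walkChain (p : G.Walk u v) : G.edgeSet → ℤ :=
  (p.darts.map dartChain).sum

theorem walkChain_nil : walkChain (Walk.nil : G.Walk u u) = 0 :=
  rfl

theorem walkChain_cons {w : V} (h : G.Adj u v) (p : G.Walk v w) :
    walkChain (Walk.cons h p) = dartChain ⟨(u, v), h⟩ + walkChain p := by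
  simp [walkChain]

theorem walkChain_mem_chainsOn {p : G.Walk u v} (hp : ∀ e ∈ p.edges, e ∈ T.edgeSet) :
    walkChain p ∈ chainsOn G T := by
  refine list_sum_mem (List.forall_mem_map.mpr fun d hd => single_mem_chainsOn ?_ _)
  exact hp d.edge (List.mem_map_of_mem hd)

theorem orientedIncMat_mulVec_dartChain [Fintype G.edgeSet] (d : G.Dart) :
    orientedIncMat G *ᵥ dartChain d = Pi.single d.snd 1 - Pi.single d.fst 1 := by
  obtain ⟨⟨a, b⟩, h⟩ := d
  rw [dartChain, orientedIncMat_mulVec_single]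
  rcases h.ne.lt_or_gt with hab | hba
  · simp [Dart.edge, hab.le]
  · simp [Dart.edge, hba.le, hba.not_ge, Pi.single_neg, neg_add_eq_sub]

theorem orientedIncMat_mulVec_walkChain [Fintype G.edgeSet] (p : G.Walk u v) :
    orientedIncMat G *ᵥ walkChain p = Pi.single v 1 - Pi.single u 1 := by
  induction p with
  | nil => rw [walkChain_nil, mulVec_zero, sub_self]
  | cons h p ih =>
    rw [walkChain_cons, mulVec_add, orientedIncMat_mulVec_dartChain, ih, add_comm,
      sub_add_sub_cancel]

end WalkChain

section Uniqueness

variable {V : Type*} [LinearOrder V] {G T : SimpleGraph V} [Fintype G.edgeSet]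

theorem apply_eq_zero_of_isBridge {c : G.edgeSet → ℤ} (hcT : c ∈ chainsOn G T)
    (hc : orientedIncMat G *ᵥ c = 0) {e : G.edgeSet} (he : T.IsBridge e) : c e = 0 := by
  classical
  have mk_inf_sup (x : Sym2 V) : s(x.inf, x.sup) = x := Sym2.sortEquiv.symm_apply_apply x
  let H := T.deleteEdges {(e : Sym2 V)}
  let side (v : V) : ℤ := if H.Reachable (e : Sym2 V).inf v then 1 else 0
  have side_adj {a b : V} (hab : H.Adj a b) : side a = side b :=
    if_congr ⟨(·.trans hab.reachable), (·.trans hab.symm.reachable)⟩ rfl rfl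
  have side_inf : side (e : Sym2 V).inf = 1 := if_pos (Reachable.refl _)
  have side_sup : side (e : Sym2 V).sup = 0 := by
    rw [← mk_inf_sup e, isBridge_iff, mk_inf_sup] at he
    exact if_neg he
  have other_eq_zero (x : G.edgeSet) (hx : x ≠ e) :
      c x • (side (x : Sym2 V).sup - side (x : Sym2 V).inf) = 0 := by
    by_cases hxT : (x : Sym2 V) ∈ T.edgeSet
    · have hadj : H.Adj (x : Sym2 V).inf (x : Sym2 V).sup := by
        rw [deleteEdges_adj, ← mem_edgeSet, mk_inf_sup]
        exact ⟨hxT, fun h => hx (Subtype.ext h)⟩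
      rw [side_adj hadj, sub_self, smul_zero]
    · rw [mem_chainsOn.mp hcT x hxT, zero_smul]
  have pairing := sum_smul_sub_eq_zero_of_mulVec_eq_zero side hc
  rw [Fintype.sum_eq_single e other_eq_zero, side_inf, side_sup] at pairing
  simpa using pairing

theorem eq_zero_of_mulVec_eq_zero_of_isAcyclic (hT : T.IsAcyclic) {c : G.edgeSet → ℤ}
    (hcT : c ∈ chainsOn G T) (hc : orientedIncMat G *ᵥ c = 0) : c = 0 := by
  ext e
  by_cases he : (e : Sym2 V) ∈ T.edgeSet
  · exact apply_eq_zero_of_isBridge hcT hc (isAcyclic_iff_forall_isBridge.mp hT he)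
  · exact mem_chainsOn.mp hcT e he

theorem injOn_mulVec_chainsOn (hT : T.IsAcyclic) :
    Set.InjOn (orientedIncMat G *ᵥ ·) (chainsOn G T) := by
  intro c hcT d hdT (hcd : orientedIncMat G *ᵥ c = orientedIncMat G *ᵥ d)
  have hsub : orientedIncMat G *ᵥ (c - d) = 0 := by rw [mulVec_sub, hcd, sub_self]
  exact sub_eq_zero.mp (eq_zero_of_mulVec_eq_zero_of_isAcyclic hT (sub_mem hcT hdT) hsub)

end Uniqueness

theorem existsUnique_tree_chain_with_boundary_general {V : Type*} [LinearOrder V]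
    {G T : SimpleGraph V} [Fintype G.edgeSet] (hTG : T ≤ G) (hT : T.IsAcyclic) {S F : V}
    (hSF : T.Reachable S F) :
    ∃! d' : G.edgeSet → ℤ,
      d' ∈ chainsOn G T ∧ orientedIncMat G *ᵥ d' = Pi.single F 1 - Pi.single S 1 := by
  obtain ⟨p⟩ := hSF
  have hp : walkChain (p.mapLe hTG) ∈ chainsOn G T :=
    walkChain_mem_chainsOn fun e he => p.edges_subset_edgeSet (by simpa using he)
  have hbd := orientedIncMat_mulVec_walkChain (p.mapLe hTG)
  exact ⟨_, ⟨hp, hbd⟩, fun d ⟨hd, hdbd⟩ => injOn_mulVec_chainsOn hT hd hp (hdbd.trans hbd.symm)⟩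

theorem existsUnique_tree_chain_with_boundary {V : Type*} [Fintype V] [Nonempty V]
    [LinearOrder V] (G T : SimpleGraph V) [DecidableRel G.Adj] (hG : G.Connected)
    (hTG : T ≤ G) (hT : T.IsTree) (S F : V) :
    ∃! d' : G.edgeSet → ℤ,
      (∀ e : G.edgeSet, (e : Sym2 V) ∉ T.edgeSet → d' e = 0) ∧
        orientedIncMat G *ᵥ d' = Pi.single F 1 - Pi.single S 1 := by
  exact existsUnique_tree_chain_with_boundary_general hTG hT.isAcyclic
    (hT.connected.preconnected S F)
end
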